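/- arXiv:1803.06118 — 2 statements merged into one kernel-verified Lean document; each statement's English description precedes it below -/
import Mathlib

section
/- Let d be one of the Kendall tau, Hamming, Spearman footrule or Spearman rank correlation distances on S_∞, let (σ_i)_{i≥1} be a sequence in S_∞ satisfying Conditions 1 and 2, and let θ* = (θ_1*,θ_2*,θ_3*) have positive entries. Then for every (λ_1,λ_2,λ_3) ∈ ℝ³ with (λ_1,λ_2,λ_3) ≠ (0,0,0), liminf_{n→∞} (1/n) Σ_{i=1}^n Σ_{j=1}^n ( −λ_1·θ_2*·d(σ_i,σ_j)·exp(−θ_1*·d(σ_i,σ_j)) + λ_2·exp(−θ_1*·d(σ_i,σ_j)) + λ_3·1_{i=j} )² > 0; i.e. the quantity (1/n) Σ_{i,j} (Σ_{k=1}^3 λ_k · ∂K'_{θ*}(σ_i,σ_j)/∂θ_k)² is bounded away from 0 for large n. -/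
/-!
Write the entries as `((a x + b) exp (-t x) + l 1_{i=j})²` with `x = d (σ i) (σ j)`.

If `a = b = 0`, then `l ≠ 0` and the diagonal alone contributes `l²` to the average. Otherwise the
affine factor `a x + b` is bounded away from `0` for `x ≥ R`. Condition 1 gives an offset `k ≥ 1`
with `d (σ i) (σ (i + k)) ≥ k ^ β ≥ R` for all `i`, while Condition 2 and a quasi-triangle
inequality `d x z ≤ 2 (d x y + d y z)`, valid for all four distances (`SInf.quasi_triangle`), bound
`d (σ i) (σ (i + k))` above uniformly in `i` (`exists_offdiag_bound`). So the entries on the `k`-th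
off-diagonal are at least some `δ > 0`, and the average is at least `δ / 2` once `n > 2 k`
(`le_average`).

Since the `liminf` is taken in `ℝ`, where it has a junk value for sequences tending to infinity, an
upper bound on the averages is needed as well. By Condition 1 the entries are dominated by a
multiple of `exp (-t |i - j| ^ β)`, which is summable in `i - j ∈ ℤ` (`entry_sq_le`,
`summable_stretched_exp`, `average_le`).
-/

open scoped Classical

/-- `S_∞`: the group of finitely supported permutations of `ℕ`. -/
def SInf : Type := {σ : Equiv.Perm ℕ // {i | σ i ≠ i}.Finite}

namespace SInf

/-- Kendall's tau distance on `S_∞`. -/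
noncomputable def dKen (π σ : SInf) : ℝ :=
  ({p : ℕ × ℕ | p.1 < p.2 ∧
    ((σ.1 p.2 < σ.1 p.1 ∧ π.1 p.1 < π.1 p.2) ∨
      (σ.1 p.1 < σ.1 p.2 ∧ π.1 p.2 < π.1 p.1))}).ncard

/-- Hamming distance on `S_∞`. -/
noncomputable def dHam (π σ : SInf) : ℝ := ({i : ℕ | π.1 i ≠ σ.1 i}).ncard

/-- Spearman's footrule distance on `S_∞`. -/
noncomputable def dFoot (π σ : SInf) : ℝ := ∑' i : ℕ, |(π.1 i : ℝ) - (σ.1 i : ℝ)|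

/-- Spearman's rank correlation distance on `S_∞`. -/
noncomputable def dS2 (π σ : SInf) : ℝ := ∑' i : ℕ, ((π.1 i : ℝ) - (σ.1 i : ℝ)) ^ 2

/-- Condition 1: `d(σ_i, σ_j) ≥ |i − j|^β` for some `β > 0`. -/
def Cond1 (d : SInf → SInf → ℝ) (σ : ℕ → SInf) : Prop :=
  ∃ β : ℝ, 0 < β ∧ ∀ i j : ℕ, |(i : ℝ) - (j : ℝ)| ^ β ≤ d (σ i) (σ j)

/-- Condition 2: `d(σ_i, σ_{i+1}) ≤ c` for some `c > 0`. -/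
def Cond2 (d : SInf → SInf → ℝ) (σ : ℕ → SInf) : Prop :=
  ∃ c : ℝ, 0 < c ∧ ∀ i : ℕ, d (σ i) (σ (i + 1)) ≤ c

/-- The covariance kernel `K'_θ(σ,σ') = θ₂ exp(−θ₁ d(σ,σ')) + θ₃ 1_{σ=σ'}`,
for `θ = (θ 0, θ 1, θ 2)`. -/
noncomputable def Kp (d : SInf → SInf → ℝ) (θ : Fin 3 → ℝ) (s s' : SInf) : ℝ :=
  θ 1 * Real.exp (-(θ 0) * d s s') + (if s = s' then θ 2 else 0)

end SInf

namespace SInf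

/-- The set of pairs of indices which `π` and `σ` order differently. -/
def discord (π σ : SInf) : Set (ℕ × ℕ) :=
  {p : ℕ × ℕ | p.1 < p.2 ∧
    ((σ.1 p.2 < σ.1 p.1 ∧ π.1 p.1 < π.1 p.2) ∨
      (σ.1 p.1 < σ.1 p.2 ∧ π.1 p.2 < π.1 p.1))}

/-- Beyond some `N` the permutation is the identity, and hence it preserves `{0, …, N - 1}`. -/
lemma exists_bound (π : SInf) :
    ∃ N, ∀ M, N ≤ M → (∀ i, M ≤ i → π.1 i = i) ∧ ∀ i, i < M → π.1 i < M := by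
  obtain ⟨B, hB⟩ := π.2.bddAbove
  have hfix : ∀ i, B + 1 ≤ i → π.1 i = i := by
    intro i hi
    by_contra hne
    have := hB (show i ∈ {i | π.1 i ≠ i} from hne)
    omega
  refine ⟨B + 1, fun M hM => ⟨fun i hi => hfix i (hM.trans hi), fun i hi => ?_⟩⟩
  by_contra hge
  have h := π.1.injective (hfix (π.1 i) (by omega))
  omega

lemma finite_discord (π σ : SInf) : (discord π σ).Finite := by
  obtain ⟨N₁, h₁⟩ := exists_bound π
  obtain ⟨N₂, h₂⟩ := exists_bound σ
  obtain ⟨a₁, b₁⟩ := h₁ (max N₁ N₂) (le_max_left _ _)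
  obtain ⟨a₂, b₂⟩ := h₂ (max N₁ N₂) (le_max_right _ _)
  set N := max N₁ N₂
  refine ((Set.finite_Iio N).prod (Set.finite_Iio N)).subset ?_
  rintro ⟨i, j⟩ ⟨hij, h⟩
  simp only at hij h
  have hj : j < N := by
    by_contra hj
    have e₁ := a₁ j (by omega)
    have e₂ := a₂ j (by omega)
    by_cases hi : i < N
    · have := b₁ i hi
      have := b₂ i hi
      omega
    · have := a₁ i (by omega)
      have := a₂ i (by omega)
      omega
  exact ⟨hij.trans hj, hj⟩

lemma finite_ne (π σ : SInf) : {i : ℕ | π.1 i ≠ σ.1 i}.Finite := by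
  refine (π.2.union σ.2).subset fun i hi => ?_
  by_contra h
  simp only [Set.mem_union, Set.mem_ofPred_eq, not_or, not_not] at h hi
  exact hi (h.1.trans h.2.symm)

lemma summable_abs (π σ : SInf) : Summable fun i : ℕ => |(π.1 i : ℝ) - (σ.1 i : ℝ)| := by
  refine summable_of_hasFiniteSupport ((finite_ne π σ).subset fun i hi h => hi ?_)
  simp [h]

lemma summable_sq (π σ : SInf) : Summable fun i : ℕ => ((π.1 i : ℝ) - (σ.1 i : ℝ)) ^ 2 := by
  refine summable_of_hasFiniteSupport ((finite_ne π σ).subset fun i hi h => hi ?_)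
  simp [h]

lemma dKen_triangle (x y z : SInf) : dKen x z ≤ dKen x y + dKen y z := by
  change ((discord x z).ncard : ℝ) ≤ (discord x y).ncard + (discord y z).ncard
  have hsub : discord x z ⊆ discord x y ∪ discord y z := by
    rintro ⟨i, j⟩ ⟨hij, h⟩
    simp only at hij h
    have hne : y.1 i ≠ y.1 j := fun e => hij.ne (y.1.injective e)
    simp only [discord, Set.mem_union, Set.mem_ofPred_eq]
    omega
  exact_mod_cast (Set.ncard_le_ncard hsub ((finite_discord x y).union (finite_discord y z))).trans
    (Set.ncard_union_le _ _)

lemma dHam_triangle (x y z : SInf) : dHam x z ≤ dHam x y + dHam y z := by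
  have hsub : {i : ℕ | x.1 i ≠ z.1 i} ⊆ {i | x.1 i ≠ y.1 i} ∪ {i | y.1 i ≠ z.1 i} := by
    intro i hi
    simp only [Set.mem_union, Set.mem_ofPred_eq] at hi ⊢
    omega
  unfold dHam
  exact_mod_cast (Set.ncard_le_ncard hsub ((finite_ne x y).union (finite_ne y z))).trans
    (Set.ncard_union_le _ _)

lemma dFoot_triangle (x y z : SInf) : dFoot x z ≤ dFoot x y + dFoot y z := by
  unfold dFoot
  rw [← (summable_abs x y).tsum_add (summable_abs y z)]
  exact (summable_abs x z).tsum_le_tsum (fun i => abs_sub_le _ _ _)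
    ((summable_abs x y).add (summable_abs y z))

lemma dS2_quasi_triangle (x y z : SInf) : dS2 x z ≤ 2 * (dS2 x y + dS2 y z) := by
  unfold dS2
  rw [← (summable_sq x y).tsum_add (summable_sq y z), ← tsum_mul_left]
  refine (summable_sq x z).tsum_le_tsum (fun i => ?_)
    (((summable_sq x y).add (summable_sq y z)).mul_left 2)
  nlinarith [sq_nonneg (((x.1 i : ℝ) - y.1 i) - ((y.1 i : ℝ) - z.1 i))]

/-- The constant `2` is needed for `dS2` only, which is the square of a metric. -/
lemma quasi_triangle (d : SInf → SInf → ℝ)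
    (hd : d = dKen ∨ d = dHam ∨ d = dFoot ∨ d = dS2) (x y z : SInf) :
    d x z ≤ 2 * (d x y + d y z) := by
  rcases hd with rfl | rfl | rfl | rfl
  · have h0 : 0 ≤ dKen x y + dKen y z := by unfold dKen; positivity
    linarith [dKen_triangle x y z]
  · have h0 : 0 ≤ dHam x y + dHam y z := by unfold dHam; positivity
    linarith [dHam_triangle x y z]
  · have h0 : 0 ≤ dFoot x y + dFoot y z :=
      add_nonneg (tsum_nonneg fun _ => abs_nonneg _) (tsum_nonneg fun _ => abs_nonneg _)
    linarith [dFoot_triangle x y z]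
  · exact dS2_quasi_triangle x y z

end SInf

/-- Stretched-exponential decay is summable over `ℤ`, by comparison with `k ^ (-2)`. -/
lemma summable_stretched_exp {t β : ℝ} (ht : 0 < t) (hβ : 0 < β) :
    Summable fun m : ℤ => Real.exp (-t * |(m : ℝ)| ^ β) := by
  have hnat : Summable fun k : ℕ => Real.exp (-t * (k : ℝ) ^ β) := by
    refine summable_of_isBigO_nat (g := fun k : ℕ => (k : ℝ) ^ (-2 : ℝ))
      (Real.summable_nat_rpow.2 (by norm_num)) ?_
    have h := (isLittleO_exp_neg_mul_rpow_atTop ht (-2 / β)).comp_tendsto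
      ((tendsto_rpow_atTop hβ).comp tendsto_natCast_atTop_atTop)
    refine h.isBigO.congr (fun _ => rfl) fun k => ?_
    simp only [Function.comp_apply]
    rw [← Real.rpow_mul (Nat.cast_nonneg k), mul_div_cancel₀ _ hβ.ne']
  refine Summable.of_nat_of_neg ?_ ?_
  · simpa using hnat
  · simpa using hnat

/-- A matrix whose entries are dominated by `M * g (i - j)` with `g` summable has row sums bounded
by `M * ∑' m, g m`, and so has the average of its row sums. -/
lemma average_le {F : ℕ → ℕ → ℝ} {g : ℤ → ℝ} {M : ℝ} (hM : 0 ≤ M) (hg : Summable g)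
    (hg0 : ∀ m, 0 ≤ g m) (hF : ∀ i j : ℕ, F i j ≤ M * g ((i : ℤ) - j)) (n : ℕ) :
    (1 / (n : ℝ)) * ∑ i ∈ Finset.range n, ∑ j ∈ Finset.range n, F i j ≤ M * ∑' m, g m := by
  have hS : 0 ≤ M * ∑' m, g m := mul_nonneg hM (tsum_nonneg hg0)
  have hrow : ∀ i, ∑ j ∈ Finset.range n, F i j ≤ M * ∑' m, g m := by
    intro i
    calc ∑ j ∈ Finset.range n, F i j
        ≤ ∑ j ∈ Finset.range n, M * g ((i : ℤ) - j) := Finset.sum_le_sum fun j _ => hF i j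
      _ = M * ∑ m ∈ (Finset.range n).image fun j : ℕ => (i : ℤ) - j, g m := by
          rw [← Finset.mul_sum, Finset.sum_image]
          intro a _ b _ h
          simp only at h
          omega
      _ ≤ M * ∑' m, g m :=
          mul_le_mul_of_nonneg_left (hg.sum_le_tsum _ fun m _ => hg0 m) hM
  have htot : ∑ i ∈ Finset.range n, ∑ j ∈ Finset.range n, F i j ≤ n * (M * ∑' m, g m) := by
    simpa using Finset.sum_le_sum (s := Finset.range n) fun i _ => hrow i
  rcases Nat.eq_zero_or_pos n with rfl | hn
  · simpa using hS
  · have hn' : (0 : ℝ) < n := by exact_mod_cast hn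
    rw [one_div, inv_mul_le_iff₀ hn']
    exact htot

/-- One diagonal on which the entries are at least `δ` already contributes `(n - k) δ`. -/
lemma le_average {F : ℕ → ℕ → ℝ} (hF0 : ∀ i j, 0 ≤ F i j) {δ : ℝ} (hδ : 0 < δ) (k : ℕ)
    (hF : ∀ i, δ ≤ F i (i + k)) {n : ℕ} (hn : 2 * k + 1 ≤ n) :
    δ / 2 ≤ (1 / (n : ℝ)) * ∑ i ∈ Finset.range n, ∑ j ∈ Finset.range n, F i j := by
  have hn0 : (0 : ℝ) < n := by exact_mod_cast (by omega : 0 < n)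
  have hsum : ((n - k : ℕ) : ℝ) * δ ≤ ∑ i ∈ Finset.range n, ∑ j ∈ Finset.range n, F i j := by
    calc ((n - k : ℕ) : ℝ) * δ = ∑ i ∈ Finset.range (n - k), δ := by simp
      _ ≤ ∑ i ∈ Finset.range (n - k), ∑ j ∈ Finset.range n, F i j := by
          refine Finset.sum_le_sum fun i hi => (hF i).trans ?_
          have hi' := Finset.mem_range.1 hi
          exact Finset.single_le_sum (f := fun j => F i j) (fun j _ => hF0 i j)
            (Finset.mem_range.2 (by omega : i + k < n))
      _ ≤ _ := Finset.sum_le_sum_of_subset_of_nonneg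
          (Finset.range_subset_range.2 (Nat.sub_le _ _))
          fun i _ _ => Finset.sum_nonneg fun j _ => hF0 i j
  rw [one_div, le_inv_mul_iff₀ hn0]
  refine le_trans ?_ hsum
  rw [Nat.cast_sub (by omega)]
  have : 2 * (k : ℝ) + 1 ≤ n := by exact_mod_cast hn
  nlinarith

/-- The square of an entry at distance `x ≥ y` decays like `exp (-t y)`: the square carries the rate
`2 t`, half of which absorbs the polynomial factor. The number `e` stands for the indicator of the
diagonal. -/
lemma entry_sq_le {a b l t x e y : ℝ} (ht : 0 < t) (hx : 0 ≤ x) (hyx : y ≤ x)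
    (he : e ^ 2 ≤ Real.exp (-t * y)) :
    (a * x * Real.exp (-t * x) + b * Real.exp (-t * x) + l * e) ^ 2
      ≤ (8 * a ^ 2 / t ^ 2 + 4 * b ^ 2 + 2 * l ^ 2) * Real.exp (-t * y) := by
  set E := Real.exp (-t * x) with hE
  have hE0 : 0 < E := Real.exp_pos _
  have hE1 : E ≤ 1 := Real.exp_le_one_iff.2 (by nlinarith)
  have hEy : E ≤ Real.exp (-t * y) := Real.exp_le_exp.2 (by nlinarith)
  have hquad : x ^ 2 * E ≤ 2 / t ^ 2 := by
    have h := Real.quadratic_le_exp_of_nonneg (mul_nonneg ht.le hx)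
    have hEE : Real.exp (t * x) * E = 1 := by
      rw [hE, ← Real.exp_add]; simp
    rw [le_div_iff₀ (by positivity)]
    have h' : (t * x) ^ 2 ≤ 2 * Real.exp (t * x) := by nlinarith [mul_nonneg ht.le hx]
    nlinarith [mul_le_mul_of_nonneg_right h' hE0.le]
  have hx2 : (a * x * E) ^ 2 ≤ 2 * a ^ 2 / t ^ 2 * E := by
    have := mul_le_mul_of_nonneg_left hquad (mul_nonneg (sq_nonneg a) hE0.le)
    calc (a * x * E) ^ 2 = a ^ 2 * E * (x ^ 2 * E) := by ring
      _ ≤ a ^ 2 * E * (2 / t ^ 2) := this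
      _ = _ := by ring
  have hb2 : (b * E) ^ 2 ≤ b ^ 2 * E := by
    rw [mul_pow]
    exact mul_le_mul_of_nonneg_left (by nlinarith) (sq_nonneg b)
  have hl2 : (l * e) ^ 2 ≤ l ^ 2 * Real.exp (-t * y) := by
    rw [mul_pow]
    exact mul_le_mul_of_nonneg_left he (sq_nonneg l)
  have hsq : (a * x * E + b * E + l * e) ^ 2
      ≤ 4 * (a * x * E) ^ 2 + 4 * (b * E) ^ 2 + 2 * (l * e) ^ 2 := by
    nlinarith [sq_nonneg (a * x * E + b * E - l * e), sq_nonneg (a * x * E - b * E)]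
  have hc : 0 ≤ 8 * a ^ 2 / t ^ 2 + 4 * b ^ 2 := by positivity
  calc _ ≤ _ := hsq
    _ ≤ 4 * (2 * a ^ 2 / t ^ 2 * E) + 4 * (b ^ 2 * E) + 2 * (l ^ 2 * Real.exp (-t * y)) := by
        linarith
    _ = (8 * a ^ 2 / t ^ 2 + 4 * b ^ 2) * E + 2 * l ^ 2 * Real.exp (-t * y) := by ring
    _ ≤ (8 * a ^ 2 / t ^ 2 + 4 * b ^ 2) * Real.exp (-t * y)
          + 2 * l ^ 2 * Real.exp (-t * y) := by
        linarith [mul_le_mul_of_nonneg_left hEy hc]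
    _ = _ := by ring

/-- Condition 2 bounds the distances along every fixed off-diagonal. -/
lemma exists_offdiag_bound (d : SInf → SInf → ℝ)
    (hd : d = SInf.dKen ∨ d = SInf.dHam ∨ d = SInf.dFoot ∨ d = SInf.dS2)
    (σ : ℕ → SInf) (h2 : SInf.Cond2 d σ) (k : ℕ) :
    ∃ C : ℝ, ∀ i, d (σ i) (σ (i + (k + 1))) ≤ C := by
  obtain ⟨c, -, hc⟩ := h2
  induction k with
  | zero => exact ⟨c, hc⟩
  | succ k ih =>
    obtain ⟨C, hC⟩ := ih
    refine ⟨2 * (C + c), fun i => ?_⟩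
    have h := SInf.quasi_triangle d hd (σ i) (σ (i + (k + 1))) (σ (i + (k + 1) + 1))
    have := hC i
    have := hc (i + (k + 1))
    rw [← add_assoc i (k + 1) 1]
    linarith

/-- An affine function which is not identically zero is bounded away from `0` far out. -/
lemma exists_affine_away {a b : ℝ} (hab : ¬(a = 0 ∧ b = 0)) :
    ∃ R ε : ℝ, 0 < ε ∧ ∀ x, R ≤ x → ε ≤ |a * x + b| := by
  by_cases ha : a = 0
  · subst ha
    have hb : b ≠ 0 := fun h => hab ⟨rfl, h⟩
    exact ⟨0, |b|, abs_pos.2 hb, fun x _ => by simp⟩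
  · refine ⟨|b / a| + 1, |a|, abs_pos.2 ha, fun x hx => ?_⟩
    have e : a * x + b = a * (x + b / a) := by field_simp
    rw [e, abs_mul]
    refine le_mul_of_one_le_right (abs_nonneg a) ?_
    refine le_trans ?_ (le_abs_self _)
    linarith [neg_abs_le (b / a)]

/-- Under Conditions 1 and 2, for every `λ ≠ 0`,
`(1/n) Σ_{i,j≤n} (Σ_k λ_k ∂K'_{θ*}(σ_i,σ_j)/∂θ_k)²` has positive liminf. -/
theorem liminf_gradient_quadratic_pos (d : SInf → SInf → ℝ)
    (hd : d = SInf.dKen ∨ d = SInf.dHam ∨ d = SInf.dFoot ∨ d = SInf.dS2)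
    (σ : ℕ → SInf) (h1 : SInf.Cond1 d σ) (h2 : SInf.Cond2 d σ)
    (θstar : Fin 3 → ℝ) (hθstar : ∀ i, 0 < θstar i)
    (lam : Fin 3 → ℝ) (hlam : lam ≠ 0) :
    0 < Filter.atTop.liminf fun n : ℕ =>
      (1 / (n : ℝ)) * ∑ i ∈ Finset.range n, ∑ j ∈ Finset.range n,
        (-(lam 0) * θstar 1 * d (σ i) (σ j) * Real.exp (-(θstar 0) * d (σ i) (σ j))
          + lam 1 * Real.exp (-(θstar 0) * d (σ i) (σ j))
          + lam 2 * (if i = j then (1 : ℝ) else 0)) ^ 2 := by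
  obtain ⟨β, hβ, hdβ⟩ := id h1
  have hd0 : ∀ i j, 0 ≤ d (σ i) (σ j) := fun i j =>
    (Real.rpow_nonneg (abs_nonneg _) β).trans (hdβ i j)
  have ht : 0 < θstar 0 := hθstar 0
  set t := θstar 0
  set a := -(lam 0) * θstar 1 with ha
  set F : ℕ → ℕ → ℝ := fun i j =>
    (a * d (σ i) (σ j) * Real.exp (-t * d (σ i) (σ j))
      + lam 1 * Real.exp (-t * d (σ i) (σ j)) + lam 2 * (if i = j then (1 : ℝ) else 0)) ^ 2
    with hF
  have hF0 : ∀ i j, 0 ≤ F i j := fun i j => sq_nonneg _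
  have hupper : ∀ i j : ℕ, F i j ≤ (8 * a ^ 2 / t ^ 2 + 4 * lam 1 ^ 2 + 2 * lam 2 ^ 2)
      * Real.exp (-t * |(((i : ℤ) - j : ℤ) : ℝ)| ^ β) := by
    intro i j
    refine entry_sq_le ht (hd0 i j) (by simpa using hdβ i j) ?_
    by_cases hij : i = j
    · simp [hij, Real.zero_rpow hβ.ne']
    · simpa [hij] using (Real.exp_pos _).le
  have hlower : ∃ k : ℕ, ∃ δ : ℝ, 0 < δ ∧ ∀ i, δ ≤ F i (i + k) := by
    by_cases hab : a = 0 ∧ lam 1 = 0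
    · -- Only the nugget coefficient survives, and the diagonal suffices.
      obtain ⟨ha0, hb0⟩ := hab
      have hl0 : lam 0 = 0 := by
        simpa [ha, (hθstar 1).ne'] using ha0
      have hl2 : lam 2 ≠ 0 := by
        intro h
        apply hlam
        funext i
        fin_cases i <;> simp [hl0, hb0, h]
      exact ⟨0, lam 2 ^ 2, by positivity, fun i => by simp [hF, ha0, hb0]⟩
    · obtain ⟨R, ε, hε, hR⟩ := exists_affine_away hab
      -- Condition 1 pushes the `(k + 1)`-st off-diagonal beyond the zero of the affine factor.
      obtain ⟨k, hk⟩ : ∃ k : ℕ, R ≤ ((k + 1 : ℕ) : ℝ) ^ β :=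
        ((((tendsto_rpow_atTop hβ).comp tendsto_natCast_atTop_atTop).comp
          (Filter.tendsto_add_atTop_nat 1)).eventually_ge_atTop R).exists
      obtain ⟨C, hC⟩ := exists_offdiag_bound d hd σ h2 k
      refine ⟨k + 1, (ε * Real.exp (-t * C)) ^ 2, by positivity, fun i => ?_⟩
      have hne : ¬ i = i + (k + 1) := by omega
      have hx : R ≤ d (σ i) (σ (i + (k + 1))) := by
        refine hk.trans (le_trans (le_of_eq ?_) (hdβ i (i + (k + 1))))
        congr 1
        rw [abs_sub_comm, Nat.cast_add i, add_sub_cancel_left, Nat.abs_cast]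
      simp only [hF, if_neg hne, mul_zero, add_zero, ← add_mul]
      rw [← sq_abs (_ * Real.exp (-t * d _ _)), abs_mul, abs_of_pos (Real.exp_pos _)]
      have hexp : Real.exp (-t * C) ≤ Real.exp (-t * d (σ i) (σ (i + (k + 1)))) :=
        Real.exp_le_exp.2 (by nlinarith [hC i])
      have := hR _ hx
      gcongr
  obtain ⟨k, δ, hδ, hk⟩ := hlower
  refine (half_pos hδ).trans_le (Filter.le_liminf_of_le ?_ ?_)
  · -- The real-valued `liminf` is meaningful only once the averages are bounded above.
    refine Filter.IsBoundedUnder.isCoboundedUnder_ge (Filter.isBoundedUnder_of ⟨_, fun n =>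
      average_le (by positivity) (summable_stretched_exp ht hβ) (fun m => (Real.exp_pos _).le)
        hupper n⟩)
  · filter_upwards [Filter.eventually_ge_atTop (2 * k + 1)] with n hn
    exact le_average hF0 hδ k hk hn
end

section
/- Let d be one of the Kendall tau, Hamming, Spearman footrule or Spearman rank correlation distances on S_∞, let (σ_i)_{i≥1} be a sequence in S_∞ satisfying Conditions 1 and 2, and let θ* = (θ_1*,θ_2*,θ_3*) have positive entries. For each n, let R_{θ*} = (K'_{θ*}(σ_i,σ_j))_{1≤i,j≤n}, let ∂R/∂θ_1 = (−θ_2*·d(σ_i,σ_j)·exp(−θ_1*·d(σ_i,σ_j)))_{i,j}, ∂R/∂θ_2 = (exp(−θ_1*·d(σ_i,σ_j)))_{i,j}, ∂R/∂θ_3 = I_n, and define the 3×3 matrix M_ML(n) by (M_ML(n))_{k,l} = (1/(2n))·Tr(R_{θ*}^{−1}·(∂R/∂θ_k)·R_{θ*}^{−1}·(∂R/∂θ_l)). Then 0 < liminf_{n→∞} λ_min(M_ML(n)) ≤ limsup_{n→∞} λ_max(M_ML(n)) < ∞, where λ_min and λ_max denote smallest and largest eigenvalues. -/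
/-!
Each of the four distances is a squared Euclidean distance: there is a map `Φ` into a real
Euclidean space with `d s s' = ‖Φ s - Φ s'‖²` (`SqEuclidean`). By the Schur product theorem the
matrix `exp(-θ₁ d(σ_i, σ_j))` is then positive semidefinite, so the eigenvalues of `R` are at
least `θ₃`. Condition 1 bounds the row sums of `R` uniformly, so by Gershgorin's theorem its
eigenvalues are at most some `Λ` independent of `n`.

For `v : Fin 3 → ℝ` and `A = ∑ k, v k • ∂R/∂θ_k`, the quadratic form of `M_ML(n)` at `v` is
`Tr(R⁻¹ A R⁻¹ A) / (2n)`. Diagonalizing `R` shows that it lies between `Λ⁻² ‖A‖_F² / (2n)` and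
`θ₃⁻² ‖A‖_F² / (2n)` (`trace_inv_bounds`), so it remains to compare `‖A‖_F²` with `n ‖v‖²`.

* Upper bound: `A_ij²` is at most a constant times `‖v‖² exp(-θ₁ d(σ_i, σ_j))`, and these row
  sums are bounded.
* Lower bound: fix `K` with `K^β ≥ c + 1`. Row `i` contains the entries at `i`, `i + 1` and
  `i + K`, where the distances are `0`, at most `c`, and between `c + 1` and `K² c`. The two
  off-diagonal entries recover `v 0` and `v 1`, the diagonal entry then recovers `v 2`, with
  constants independent of `i` (`row_lower_bound`). This holds for at least `n / 2` rows once
  `n ≥ 2 K`.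
-/

open scoped Classical

open Matrix

/-- The covariance matrix `R_{θ*} = (K'_{θ*}(σ_i,σ_j))_{1≤i,j≤n}`. -/
noncomputable def Rmat (d : SInf → SInf → ℝ) (σ : ℕ → SInf) (θ : Fin 3 → ℝ) (n : ℕ) :
    Matrix (Fin n) (Fin n) ℝ :=
  Matrix.of fun i j : Fin n => SInf.Kp d θ (σ i.1) (σ j.1)

/-- The entrywise partial derivatives `∂R/∂θ_k` of `R_θ` at `θ*`. -/
noncomputable def dRmat (d : SInf → SInf → ℝ) (σ : ℕ → SInf) (θ : Fin 3 → ℝ) (n : ℕ)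
    (k : Fin 3) : Matrix (Fin n) (Fin n) ℝ :=
  if k = 0 then
    Matrix.of fun i j : Fin n =>
      -(θ 1) * d (σ i.1) (σ j.1) * Real.exp (-(θ 0) * d (σ i.1) (σ j.1))
  else if k = 1 then
    Matrix.of fun i j : Fin n => Real.exp (-(θ 0) * d (σ i.1) (σ j.1))
  else (1 : Matrix (Fin n) (Fin n) ℝ)

/-- The `3 × 3` Fisher-information-type matrix
`(M_ML)_{k,l} = (1/(2n)) Tr(R⁻¹ (∂R/∂θ_k) R⁻¹ (∂R/∂θ_l))`. -/
noncomputable def Mml (d : SInf → SInf → ℝ) (σ : ℕ → SInf) (θ : Fin 3 → ℝ) (n : ℕ) :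
    Matrix (Fin 3) (Fin 3) ℝ :=
  Matrix.of fun k l : Fin 3 =>
    (1 / (2 * (n : ℝ))) *
      ((Rmat d σ θ n)⁻¹ * dRmat d σ θ n k * (Rmat d σ θ n)⁻¹ * dRmat d σ θ n l).trace

/-! ### Gaussian kernels are positive semidefinite -/

lemma posSemidef_of_tendsto {n : ℕ} {F : ℕ → Matrix (Fin n) (Fin n) ℝ}
    {M : Matrix (Fin n) (Fin n) ℝ} (hF : ∀ k, (F k).PosSemidef)
    (hlim : ∀ i j, Filter.Tendsto (fun k => F k i j) Filter.atTop (nhds (M i j))) :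
    M.PosSemidef := by
  refine Matrix.PosSemidef.of_dotProduct_mulVec_nonneg ?_ fun x => ?_
  · ext i j
    refine tendsto_nhds_unique (f := fun k => F k j i) (by simpa using hlim j i) ?_
    refine (hlim i j).congr fun k => ?_
    simpa using ((hF k).isHermitian.apply j i)
  · refine ge_of_tendsto' (x := Filter.atTop) (f := fun k => star x ⬝ᵥ (F k *ᵥ x)) ?_
      fun k => (hF k).dotProduct_mulVec_nonneg x
    simp only [dotProduct, mulVec]
    exact tendsto_finsetSum _ fun i _ => tendsto_const_nhds.mul
      (tendsto_finsetSum _ fun j _ => (hlim i j).mul tendsto_const_nhds)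

/-- The entrywise exponential is a limit of nonnegative combinations of Hadamard powers, so it
preserves positive semidefiniteness by the Schur product theorem. -/
lemma posSemidef_map_exp {n : ℕ} {G : Matrix (Fin n) (Fin n) ℝ} (hG : G.PosSemidef) :
    (Matrix.of fun i j => Real.exp (G i j)).PosSemidef := by
  have hpow : ∀ k : ℕ, (Matrix.of fun i j => G i j ^ k).PosSemidef := by
    intro k
    induction k with
    | zero =>
      have := Matrix.posSemidef_vecMulVec_self_star (fun _ : Fin n => (1 : ℝ))
      convert this using 1
      ext i j
      simp [Matrix.vecMulVec]
    | succ k ih =>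
      have h : ((Matrix.of fun i j => G i j ^ k).hadamard G).PosSemidef := ih.hadamard hG
      convert h using 1
      ext i j
      simp [pow_succ]
  refine posSemidef_of_tendsto
    (F := fun N => ∑ k ∈ Finset.range N, ((k.factorial : ℝ)⁻¹) • Matrix.of fun i j => G i j ^ k)
    (fun N => Matrix.posSemidef_sum _ fun k _ => (hpow k).smul (by positivity)) fun i j => ?_
  have := (NormedSpace.expSeries_div_hasSum_exp (G i j)).tendsto_sum_nat
  rw [← Real.exp_eq_exp_ℝ] at this
  simpa [Matrix.sum_apply, div_eq_inv_mul] using this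

lemma posSemidef_gaussian {ι : Type*} {n : ℕ} (T : Finset ι) (f : Fin n → ι → ℝ) {c : ℝ}
    (hc : 0 ≤ c) :
    (Matrix.of fun i j => Real.exp (-c * ∑ t ∈ T, (f i t - f j t) ^ 2)).PosSemidef := by
  have hG : (Matrix.of fun i j => (2 * c) * ∑ t ∈ T, f i t * f j t).PosSemidef := by
    have := (Matrix.posSemidef_sum T fun t _ =>
      Matrix.posSemidef_vecMulVec_self_star (fun i => f i t)).smul
        (show (0 : ℝ) ≤ 2 * c by positivity)
    convert this using 1
    ext i j
    simp [Matrix.sum_apply, Matrix.vecMulVec]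
  have h1 := Matrix.posSemidef_vecMulVec_self_star
    (fun i => Real.exp (-c * ∑ t ∈ T, f i t ^ 2))
  have h2 : ((vecMulVec (fun i => Real.exp (-c * ∑ t ∈ T, f i t ^ 2))
      (star fun i => Real.exp (-c * ∑ t ∈ T, f i t ^ 2))).hadamard
      (Matrix.of fun i j => Real.exp ((Matrix.of fun i j =>
        (2 * c) * ∑ t ∈ T, f i t * f j t) i j))).PosSemidef :=
    h1.hadamard (posSemidef_map_exp hG)
  convert h2 using 1
  ext i j
  simp only [Matrix.of_apply, Matrix.hadamard_apply, Matrix.vecMulVec, Pi.star_apply,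
    star_trivial, ← Real.exp_add, Finset.mul_sum, ← Finset.sum_add_distrib]
  congr 1
  exact Finset.sum_congr rfl fun t _ => by ring

/-! ### Trace and eigenvalue bounds -/

lemma trace_mul_self_eq {n : ℕ} {A : Matrix (Fin n) (Fin n) ℝ} (hA : Aᵀ = A) :
    (A * A).trace = ∑ i, ∑ j, A i j ^ 2 := by
  simp only [Matrix.trace, Matrix.diag, Matrix.mul_apply]
  refine Finset.sum_congr rfl fun i _ => Finset.sum_congr rfl fun j _ => ?_
  rw [sq, ← Matrix.transpose_apply A i j, hA]

/-- In an eigenbasis of `R`, the trace becomes `∑ B_ij² / (λ_i λ_j)`, where `B` is `A` in that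
basis and has the same Frobenius norm as `A`. -/
lemma trace_inv_bounds {n : ℕ} {R A : Matrix (Fin n) (Fin n) ℝ} (hR : R.IsHermitian)
    (hA : Aᵀ = A) {m S : ℝ} (hm : 0 < m) (hlow : ∀ i, m ≤ hR.eigenvalues i)
    (hup : ∀ i, hR.eigenvalues i ≤ S) :
    (S⁻¹) ^ 2 * ∑ i, ∑ j, A i j ^ 2 ≤ (R⁻¹ * A * R⁻¹ * A).trace ∧
      (R⁻¹ * A * R⁻¹ * A).trace ≤ (m⁻¹) ^ 2 * ∑ i, ∑ j, A i j ^ 2 := by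
  set U : Matrix (Fin n) (Fin n) ℝ :=
    (hR.eigenvectorUnitary : Matrix (Fin n) (Fin n) ℝ) with hU
  have hUU : star U * U = 1 := Unitary.coe_star_mul_self _
  have hUU' : U * star U = 1 := Unitary.coe_mul_star_self _
  set e := hR.eigenvalues with he
  have hpos : ∀ i, 0 < e i := fun i => hm.trans_le (hlow i)
  have hspec : R = U * diagonal e * star U := by
    have := hR.spectral_theorem
    rw [Unitary.conjStarAlgAut_apply] at this
    simpa using this
  have hinv : R⁻¹ = U * diagonal (fun i => (e i)⁻¹) * star U := by
    apply Matrix.inv_eq_right_inv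
    rw [hspec]
    calc U * diagonal e * star U * (U * diagonal (fun i => (e i)⁻¹) * star U)
        = U * diagonal e * (star U * U) * diagonal (fun i => (e i)⁻¹) * star U := by
          simp only [Matrix.mul_assoc]
      _ = U * (diagonal e * diagonal (fun i => (e i)⁻¹)) * star U := by
          rw [hUU, Matrix.mul_one, Matrix.mul_assoc U]
      _ = 1 := by
          rw [Matrix.diagonal_mul_diagonal]
          simp [(hpos _).ne', hUU']
  set B := star U * A * U with hB
  have hBt : Bᵀ = B := by
    rw [hB, Matrix.star_eq_conjTranspose, Matrix.conjTranspose_eq_transpose_of_trivial]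
    simp [Matrix.transpose_mul, hA, Matrix.mul_assoc]
  have hBs : ∀ i j, B j i = B i j := fun i j => by
    rw [← Matrix.transpose_apply B i j, hBt]
  have hfro : ∑ i, ∑ j, A i j ^ 2 = ∑ i, ∑ j, B i j ^ 2 := by
    rw [← trace_mul_self_eq hA, ← trace_mul_self_eq hBt]
    have : B * B = star U * (A * A * U) := by
      calc B * B = star U * A * (U * star U) * A * U := by
            simp only [hB, Matrix.mul_assoc]
        _ = _ := by rw [hUU']; simp only [Matrix.mul_assoc, Matrix.mul_one]
    rw [this, Matrix.trace_mul_comm (star U), Matrix.mul_assoc, hUU', Matrix.mul_one]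
  have htr : (R⁻¹ * A * R⁻¹ * A).trace = ∑ i, ∑ j, (e i)⁻¹ * (e j)⁻¹ * B i j ^ 2 := by
    have h1 : R⁻¹ * A * R⁻¹ * A = U * (diagonal (fun i => (e i)⁻¹) * star U * A * U *
        diagonal (fun i => (e i)⁻¹) * star U * A) := by
      rw [hinv]; simp only [Matrix.mul_assoc]
    have h2 : diagonal (fun i => (e i)⁻¹) * star U * A * U *
        diagonal (fun i => (e i)⁻¹) * star U * A * U =
        (diagonal (fun i => (e i)⁻¹) * B) * (diagonal (fun i => (e i)⁻¹) * B) := by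
      simp only [hB, Matrix.mul_assoc]
    rw [h1, Matrix.trace_mul_comm, h2]
    simp only [Matrix.trace, Matrix.diag, Matrix.mul_apply (M := diagonal _ * B),
      Matrix.diagonal_mul]
    refine Finset.sum_congr rfl fun i _ => Finset.sum_congr rfl fun j _ => ?_
    rw [hBs i j]; ring
  rw [htr, hfro]
  simp only [Finset.mul_sum]
  have hinvle : ∀ i, (e i)⁻¹ ≤ m⁻¹ := fun i => inv_anti₀ hm (hlow i)
  have hinvge : ∀ i, S⁻¹ ≤ (e i)⁻¹ := fun i => inv_anti₀ (hpos i) (hup i)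
  have hSinv : ∀ _ : Fin n, 0 ≤ S⁻¹ := fun i => inv_nonneg.2 ((hpos i).le.trans (hup i))
  constructor
  · refine Finset.sum_le_sum fun i _ => Finset.sum_le_sum fun j _ => ?_
    refine mul_le_mul_of_nonneg_right ?_ (sq_nonneg _)
    rw [sq]
    exact mul_le_mul (hinvge i) (hinvge j) (hSinv i) (inv_nonneg.2 (hpos i).le)
  · refine Finset.sum_le_sum fun i _ => Finset.sum_le_sum fun j _ => ?_
    refine mul_le_mul_of_nonneg_right ?_ (sq_nonneg _)
    rw [sq]
    exact mul_le_mul (hinvle i) (hinvle j) (inv_nonneg.2 (hpos j).le) (inv_nonneg.2 hm.le)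

/-- An eigenvalue is the value of the quadratic form at a unit vector. -/
lemma exists_unit_eigenvalue {n : ℕ} {M : Matrix (Fin n) (Fin n) ℝ} (hM : M.IsHermitian)
    (i : Fin n) : ∃ v : Fin n → ℝ, ∑ k, v k ^ 2 = 1 ∧ hM.eigenvalues i = v ⬝ᵥ (M *ᵥ v) := by
  refine ⟨⇑(hM.eigenvectorBasis i), ?_, ?_⟩
  · have h := hM.eigenvectorBasis.orthonormal.1 i
    rw [EuclideanSpace.norm_eq, Real.sqrt_eq_one] at h
    simpa using h
  · simpa using hM.eigenvalues_eq i

/-- Gershgorin's bound: every eigenvalue is at most the largest absolute row sum. -/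
lemma eigenvalues_le_of_row_sum {n : ℕ} {R : Matrix (Fin n) (Fin n) ℝ} (hR : R.IsHermitian)
    {S : ℝ} (hS : ∀ i, ∑ j, |R i j| ≤ S) (i : Fin n) : hR.eigenvalues i ≤ S := by
  have hev : Module.End.HasEigenvalue (Matrix.toLin' R) (hR.eigenvalues i) := by
    have h := hR.eigenvalues_mem_spectrum_real i
    rw [← Matrix.spectrum_toLin'] at h
    exact Module.End.hasEigenvalue_iff_mem_spectrum.2 h
  obtain ⟨k, hk⟩ := eigenvalue_mem_ball hev
  rw [Metric.mem_closedBall, Real.dist_eq] at hk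
  have h1 := Finset.add_sum_erase Finset.univ (fun j => |R k j|) (Finset.mem_univ k)
  simp only [Real.norm_eq_abs] at hk
  have := hS k
  have h2 := le_abs_self (hR.eigenvalues i - R k k)
  have h3 := le_abs_self (R k k)
  linarith

lemma le_eigenvalues_of_posSemidef_sub {n : ℕ} {R : Matrix (Fin n) (Fin n) ℝ}
    (hR : R.IsHermitian) {m : ℝ} (h : (R - m • (1 : Matrix (Fin n) (Fin n) ℝ)).PosSemidef)
    (i : Fin n) : m ≤ hR.eigenvalues i := by
  obtain ⟨v, hv, he⟩ := exists_unit_eigenvalue hR i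
  have h1 := h.dotProduct_mulVec_nonneg v
  rw [Matrix.sub_mulVec, Matrix.smul_mulVec, Matrix.one_mulVec, dotProduct_sub,
    dotProduct_smul, star_trivial, ← he] at h1
  have h2 : v ⬝ᵥ v = 1 := by rw [← hv]; simp [dotProduct, sq]
  rw [h2] at h1
  simpa using h1

/-! ### The four distances are squared Euclidean -/

/-- `s` fixes every integer `≥ M`. -/
def FixesFrom (M : ℕ) (s : SInf) : Prop := ∀ a, M ≤ a → s.1 a = a

lemma FixesFrom.lt {M : ℕ} {s : SInf} (h : FixesFrom M s) {a : ℕ} (ha : a < M) : s.1 a < M := by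
  by_contra! hc
  have := s.1.injective (h _ hc)
  omega

lemma exists_fixesFrom (s : SInf) : ∃ M, FixesFrom M s := by
  obtain ⟨M, hM⟩ := s.2.bddAbove
  refine ⟨M + 1, fun a ha => ?_⟩
  by_contra hne
  have : a ≤ M := hM hne
  omega

lemma exists_fixesFrom_seq (σ : ℕ → SInf) (N : ℕ) : ∃ M, ∀ i < N, FixesFrom M (σ i) := by
  choose m hm using fun i => exists_fixesFrom (σ i)
  refine ⟨(Finset.range N).sup m, fun i hi a ha => hm i a (le_trans ?_ ha)⟩
  exact Finset.le_sup (f := m) (Finset.mem_range.2 hi)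

/-- `d` is a squared Euclidean distance: on the permutations that fix every integer `≥ M`, it is
the squared distance between the images under a map `f` into a finite-dimensional real space,
with coordinates indexed by a finite set of pairs of integers. -/
def SqEuclidean (d : SInf → SInf → ℝ) : Prop :=
  ∀ M : ℕ, ∃ (T : Finset (ℕ × ℕ)) (f : SInf → ℕ × ℕ → ℝ), ∀ s s', FixesFrom M s →
    FixesFrom M s' → d s s' = ∑ t ∈ T, (f s t - f s' t) ^ 2

/-- The coordinates are the indicators of the non-inversions. -/
lemma sqEuclidean_dKen : SqEuclidean SInf.dKen := by
  intro M
  refine ⟨(Finset.range M ×ˢ Finset.range M).filter fun p => p.1 < p.2,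
    fun s p => if s.1 p.1 < s.1 p.2 then 1 else 0, fun s s' hs hs' => ?_⟩
  have hlt : ∀ {u : SInf}, FixesFrom M u → ∀ {a b : ℕ}, a < b → M ≤ b → u.1 a < u.1 b := by
    intro u hu a b hab hb
    rw [hu b hb]
    rcases lt_or_ge a M with ha | ha
    · exact (hu.lt ha).trans_le hb
    · rwa [hu a ha]
  have hset : {p : ℕ × ℕ | p.1 < p.2 ∧
      ((s'.1 p.2 < s'.1 p.1 ∧ s.1 p.1 < s.1 p.2) ∨
        (s'.1 p.1 < s'.1 p.2 ∧ s.1 p.2 < s.1 p.1))} =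
      ((((Finset.range M ×ˢ Finset.range M).filter fun p => p.1 < p.2).filter fun p =>
        ((s'.1 p.2 < s'.1 p.1 ∧ s.1 p.1 < s.1 p.2) ∨
          (s'.1 p.1 < s'.1 p.2 ∧ s.1 p.2 < s.1 p.1)) : Finset (ℕ × ℕ)) : Set (ℕ × ℕ)) := by
    ext ⟨a, b⟩
    simp only [Set.mem_ofPred_eq, Finset.coe_filter, Finset.mem_filter, Finset.mem_product,
      Finset.mem_range]
    constructor
    · rintro ⟨hab, h⟩
      have hb : b < M := by
        by_contra! hb
        have h1 := hlt hs hab hb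
        have h2 := hlt hs' hab hb
        omega
      exact ⟨⟨⟨hab.trans hb, hb⟩, hab⟩, h⟩
    · rintro ⟨⟨_, hab⟩, h⟩
      exact ⟨hab, h⟩
  rw [SInf.dKen, hset, Set.ncard_coe_finset, Finset.card_filter]
  push_cast
  refine Finset.sum_congr rfl fun p hp => ?_
  have hp' := (Finset.mem_filter.1 hp).2
  have h1 : s.1 p.1 ≠ s.1 p.2 := fun h => hp'.ne (s.1.injective h)
  have h2 : s'.1 p.1 ≠ s'.1 p.2 := fun h => hp'.ne (s'.1.injective h)
  rcases lt_or_gt_of_ne h1 with h1 | h1 <;> rcases lt_or_gt_of_ne h2 with h2 | h2 <;>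
    simp [h1, h2, h1.not_gt, h2.not_gt]

/-- The coordinates are the entries of the permutation matrix, scaled by `1/√2`: two rows that
differ do so in exactly two entries. -/
lemma sqEuclidean_dHam : SqEuclidean SInf.dHam := by
  intro M
  refine ⟨Finset.range M ×ˢ Finset.range M,
    fun s p => if s.1 p.1 = p.2 then (Real.sqrt 2)⁻¹ else 0, fun s s' hs hs' => ?_⟩
  have hset : {i : ℕ | s.1 i ≠ s'.1 i} =
      (((Finset.range M).filter fun i => s.1 i ≠ s'.1 i : Finset ℕ) : Set ℕ) := by
    ext a
    simp only [Set.mem_ofPred_eq, Finset.coe_filter, Finset.mem_range]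
    refine ⟨fun h => ⟨?_, h⟩, fun h => h.2⟩
    by_contra! ha
    exact h (by rw [hs a ha, hs' a ha])
  rw [SInf.dHam, hset, Set.ncard_coe_finset, Finset.card_filter, Finset.sum_product]
  push_cast
  refine Finset.sum_congr rfl fun a ha => ?_
  have ha := Finset.mem_range.1 ha
  have h1 := hs.lt ha
  have h2 := hs'.lt ha
  by_cases h : s.1 a = s'.1 a
  · simp [h]
  · have : ∀ b ∈ Finset.range M, ((if s.1 a = b then (Real.sqrt 2)⁻¹ else 0) -
        (if s'.1 a = b then (Real.sqrt 2)⁻¹ else 0)) ^ 2 =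
        (if s.1 a = b then (2 : ℝ)⁻¹ else 0) + (if s'.1 a = b then (2 : ℝ)⁻¹ else 0) := by
      intro b _
      by_cases h3 : s.1 a = b <;> by_cases h4 : s'.1 a = b
      · exact absurd (h3.trans h4.symm) h
      all_goals simp [h3, h4, Real.sq_sqrt]
    rw [Finset.sum_congr rfl this, Finset.sum_add_distrib, Finset.sum_ite_eq, Finset.sum_ite_eq]
    simp [h, h1, h2]
    norm_num

lemma abs_sub_eq_sum_indicator {M x y : ℕ} (hx : x < M) (hy : y < M) :
    |(x : ℝ) - y| =
      ∑ t ∈ Finset.range M, ((if x ≤ t then (1 : ℝ) else 0) - (if y ≤ t then 1 else 0)) ^ 2 := by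
  wlog h : x ≤ y generalizing x y
  · rw [abs_sub_comm, this hy hx (by omega)]
    exact Finset.sum_congr rfl fun t _ => by ring
  have : ∀ t ∈ Finset.range M,
      ((if x ≤ t then (1 : ℝ) else 0) - (if y ≤ t then 1 else 0)) ^ 2 =
        if t ∈ Finset.Ico x y then 1 else 0 := by
    intro t _
    simp only [Finset.mem_Ico]
    by_cases h1 : x ≤ t <;> by_cases h2 : y ≤ t
    · simp [h1, h2]
    · simp [h1, h2, not_le.1 h2]
    · omega
    · simp [h1, h2]
  have hsub : (Finset.range M).filter (fun t => t ∈ Finset.Ico x y) = Finset.Ico x y := by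
    ext t
    simp only [Finset.mem_filter, Finset.mem_range, Finset.mem_Ico]
    omega
  rw [Finset.sum_congr rfl this, ← Finset.sum_filter, hsub, abs_sub_comm, abs_of_nonneg]
  · simp [Nat.cast_sub h]
  · simpa using h

/-- The coordinates are the indicators of `s a ≤ t`. -/
lemma sqEuclidean_dFoot : SqEuclidean SInf.dFoot := by
  intro M
  refine ⟨Finset.range M ×ˢ Finset.range M,
    fun s p => if s.1 p.1 ≤ p.2 then 1 else 0, fun s s' hs hs' => ?_⟩
  rw [SInf.dFoot, tsum_eq_sum (s := Finset.range M), Finset.sum_product]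
  · refine Finset.sum_congr rfl fun a ha => ?_
    have ha := Finset.mem_range.1 ha
    exact abs_sub_eq_sum_indicator (hs.lt ha) (hs'.lt ha)
  · intro a ha
    have ha : M ≤ a := by simpa using ha
    simp [hs a ha, hs' a ha]

/-- The coordinates are the values of the permutation. -/
lemma sqEuclidean_dS2 : SqEuclidean SInf.dS2 := by
  intro M
  refine ⟨Finset.range M ×ˢ {0}, fun s p => (s.1 p.1 : ℝ), fun s s' hs hs' => ?_⟩
  rw [SInf.dS2, tsum_eq_sum (s := Finset.range M), Finset.sum_product]
  · simp
  · intro a ha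
    have ha : M ≤ a := by simpa using ha
    simp [hs a ha, hs' a ha]

/-- Realization of finitely many terms of the sequence in one Euclidean space. -/
lemma SqEuclidean.seq {d : SInf → SInf → ℝ} (hd : SqEuclidean d) (σ : ℕ → SInf) (N : ℕ) :
    ∃ (T : Finset (ℕ × ℕ)) (f : ℕ → ℕ × ℕ → ℝ), ∀ i < N, ∀ j < N,
      d (σ i) (σ j) = ∑ t ∈ T, (f i t - f j t) ^ 2 := by
  obtain ⟨M, hM⟩ := exists_fixesFrom_seq σ N
  obtain ⟨T, f, hf⟩ := hd M
  exact ⟨T, fun i => f (σ i), fun i hi j hj => hf _ _ (hM i hi) (hM j hj)⟩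

lemma SqEuclidean.self {d : SInf → SInf → ℝ} (hd : SqEuclidean d) (s : SInf) : d s s = 0 := by
  obtain ⟨T, f, hf⟩ := hd.seq (fun _ => s) 1
  simp [hf 0 one_pos 0 one_pos]

lemma SqEuclidean.symm {d : SInf → SInf → ℝ} (hd : SqEuclidean d) (σ : ℕ → SInf) (i j : ℕ) :
    d (σ i) (σ j) = d (σ j) (σ i) := by
  obtain ⟨T, f, hf⟩ := hd.seq σ (max i j + 1)
  rw [hf i (by omega) j (by omega), hf j (by omega) i (by omega)]
  exact Finset.sum_congr rfl fun t _ => by ring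

lemma SqEuclidean.nonneg {d : SInf → SInf → ℝ} (hd : SqEuclidean d) (σ : ℕ → SInf) (i j : ℕ) :
    0 ≤ d (σ i) (σ j) := by
  obtain ⟨T, f, hf⟩ := hd.seq σ (max i j + 1)
  rw [hf i (by omega) j (by omega)]
  positivity

/-- `K` steps of squared length at most `c` cover a squared length of at most `K² c`, by the
triangle inequality for the Euclidean distance. -/
lemma SqEuclidean.le_of_steps {d : SInf → SInf → ℝ} (hd : SqEuclidean d) (σ : ℕ → SInf) {c : ℝ}
    (hc : ∀ i, d (σ i) (σ (i + 1)) ≤ c) (i K : ℕ) :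
    d (σ i) (σ (i + K)) ≤ (K : ℝ) ^ 2 * c := by
  obtain ⟨T, f, hf⟩ := hd.seq σ (i + K + 1)
  rw [hf i (by omega) (i + K) (by omega)]
  calc ∑ t ∈ T, (f i t - f (i + K) t) ^ 2
      = ∑ t ∈ T, (∑ k ∈ Finset.range K, (f (i + k) t - f (i + (k + 1)) t)) ^ 2 := by
        refine Finset.sum_congr rfl fun t _ => ?_
        rw [Finset.sum_range_sub' (fun k => f (i + k) t) K, add_zero]
    _ ≤ ∑ t ∈ T, (K : ℝ) * ∑ k ∈ Finset.range K, (f (i + k) t - f (i + (k + 1)) t) ^ 2 := by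
        refine Finset.sum_le_sum fun t _ => ?_
        simpa using sq_sum_le_card_mul_sum_sq (s := Finset.range K)
          (f := fun k => f (i + k) t - f (i + (k + 1)) t)
    _ = (K : ℝ) * ∑ k ∈ Finset.range K, d (σ (i + k)) (σ (i + k + 1)) := by
        rw [← Finset.mul_sum, Finset.sum_comm]
        congr 1
        refine Finset.sum_congr rfl fun k hk => ?_
        have := Finset.mem_range.1 hk
        rw [hf (i + k) (by omega) (i + k + 1) (by omega)]
        rfl
    _ ≤ (K : ℝ) * ∑ k ∈ Finset.range K, c := by
        gcongr with k hk
        exact hc _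
    _ = (K : ℝ) ^ 2 * c := by simp; ring

lemma SqEuclidean.posSemidef {d : SInf → SInf → ℝ} (hd : SqEuclidean d) (σ : ℕ → SInf) {c : ℝ}
    (hc : 0 ≤ c) (n : ℕ) :
    (Matrix.of fun i j : Fin n => Real.exp (-c * d (σ i.1) (σ j.1))).PosSemidef := by
  obtain ⟨T, f, hf⟩ := hd.seq σ n
  have := posSemidef_gaussian T (fun i : Fin n => f i.1) hc
  convert this using 4 with i j
  rw [hf i.1 i.2 j.1 j.2]

/-! ### Uniform row sums -/

lemma summable_exp_neg_rpow {θ β : ℝ} (hθ : 0 < θ) (hβ : 0 < β) :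
    Summable fun k : ℕ => Real.exp (-θ * (k : ℝ) ^ β) := by
  have h := (isLittleO_exp_neg_mul_rpow_atTop hθ (-2 / β)).isBigO.comp_tendsto
    ((tendsto_rpow_atTop hβ).comp tendsto_natCast_atTop_atTop)
  refine summable_of_isBigO_nat (Real.summable_nat_rpow.2 (show (-2 : ℝ) < -1 by norm_num)) ?_
  refine h.congr_right fun k => ?_
  simp only [Function.comp_apply]
  rw [← Real.rpow_mul (Nat.cast_nonneg k), mul_div_cancel₀ _ hβ.ne']

/-- Under Condition 1 this bounds the row sums of the covariance matrix, uniformly in the row and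
in the size of the matrix. -/
lemma exists_row_bound {θ β : ℝ} (hθ : 0 < θ) (hβ : 0 < β) :
    ∃ S : ℝ, 0 < S ∧ ∀ i n : ℕ,
      ∑ j ∈ Finset.range n, Real.exp (-θ * |(i : ℝ) - (j : ℝ)| ^ β) ≤ S := by
  have hs : Summable fun z : ℤ => Real.exp (-θ * |(z : ℝ)| ^ β) := by
    refine Summable.of_nat_of_neg ?_ ?_ <;> simpa using summable_exp_neg_rpow hθ hβ
  refine ⟨∑' z : ℤ, Real.exp (-θ * |(z : ℝ)| ^ β),
    hs.tsum_pos (fun _ => (Real.exp_pos _).le) 0 (Real.exp_pos _), fun i n => ?_⟩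
  have hinj : Set.InjOn (fun j : ℕ => (i : ℤ) - j) (Finset.range n) := by
    intro a _ b _ h
    simp only at h
    omega
  have h1 := hs.sum_le_tsum ((Finset.range n).image fun j : ℕ => (i : ℤ) - j)
    (fun _ _ => (Real.exp_pos _).le)
  rw [Finset.sum_image hinj] at h1
  simpa using h1

/-! ### The directional derivative of the covariance matrix -/

/-- The `(i, j)` entry of `∑ k, v k • ∂R/∂θ_k`, indexed by natural numbers so that it does not
depend on the size of the matrix. -/
noncomputable def dirEntry (d : SInf → SInf → ℝ) (σ : ℕ → SInf) (θ v : Fin 3 → ℝ)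
    (i j : ℕ) : ℝ :=
  (v 1 - v 0 * θ 1 * d (σ i) (σ j)) * Real.exp (-(θ 0) * d (σ i) (σ j)) +
    if i = j then v 2 else 0

lemma sum_smul_dRmat (d : SInf → SInf → ℝ) (σ : ℕ → SInf) (θ v : Fin 3 → ℝ) (n : ℕ) :
    ∑ k, v k • dRmat d σ θ n k = Matrix.of fun i j : Fin n => dirEntry d σ θ v i.1 j.1 := by
  ext i j
  simp only [Fin.sum_univ_three, dRmat, dirEntry, Matrix.add_apply, Matrix.smul_apply,
    Matrix.of_apply, smul_eq_mul]
  by_cases h : i = j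
  · subst h
    simp
    ring
  · simp [h, Fin.val_ne_of_ne h]
    ring

lemma Mml_quadForm (d : SInf → SInf → ℝ) (σ : ℕ → SInf) (θ v : Fin 3 → ℝ) (n : ℕ) :
    v ⬝ᵥ (Mml d σ θ n *ᵥ v) = (1 / (2 * (n : ℝ))) *
      ((Rmat d σ θ n)⁻¹ * (∑ k, v k • dRmat d σ θ n k) * (Rmat d σ θ n)⁻¹ *
        (∑ k, v k • dRmat d σ θ n k)).trace := by
  simp only [Finset.mul_sum, Finset.sum_mul, Matrix.trace_sum, dotProduct, mulVec, Mml,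
    Matrix.of_apply, Matrix.mul_smul, Matrix.smul_mul, Matrix.trace_smul, smul_eq_mul]
  rw [Finset.sum_comm]
  refine Finset.sum_congr rfl fun i _ => Finset.sum_congr rfl fun j _ => ?_
  ring

/-- Two distances `x`, `y` that differ by at least `1` determine `v 0` and `v 1` from
`v 1 - v 0 * t * x` and `v 1 - v 0 * t * y`, and the diagonal value `v 1 + v 2` then determines
`v 2`. -/
lemma sum_sq_le_of_two_distances {c x y t : ℝ} (v : Fin 3 → ℝ) (ht : 0 < t)
    (hx0 : 0 ≤ x) (hx : x ≤ c) (hy : c + 1 ≤ y) :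
    ∑ k, v k ^ 2 ≤ (2 / t ^ 2 + 8 + 12 * c ^ 2) *
      ((v 1 + v 2) ^ 2 + (v 1 - v 0 * t * x) ^ 2 + (v 1 - v 0 * t * y) ^ 2) := by
  set b := v 0 * t with hb
  set w := v 1 + v 2 with hw
  set p := v 1 - b * x with hp
  set r := v 1 - b * y with hr
  have hb2 : b ^ 2 ≤ 2 * (w ^ 2 + p ^ 2 + r ^ 2) := by
    have h1 : p - r = b * (y - x) := by rw [hp, hr]; ring
    have h2 : b ^ 2 ≤ (p - r) ^ 2 := by
      rw [h1, mul_pow]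
      have : 1 ≤ (y - x) ^ 2 := by nlinarith
      nlinarith [sq_nonneg b]
    nlinarith [sq_nonneg (p + r), sq_nonneg w]
  have hxc : x ^ 2 ≤ c ^ 2 := by nlinarith
  have hv1 : v 1 ^ 2 ≤ (2 + 4 * c ^ 2) * (w ^ 2 + p ^ 2 + r ^ 2) := by
    have h1 : v 1 = p + b * x := by rw [hp]; ring
    have h2 : (b * x) ^ 2 ≤ 2 * (w ^ 2 + p ^ 2 + r ^ 2) * c ^ 2 := by
      rw [mul_pow]
      exact mul_le_mul hb2 hxc (sq_nonneg _) (by positivity)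
    have h3 : v 1 ^ 2 ≤ 2 * p ^ 2 + 2 * (b * x) ^ 2 := by
      rw [h1]; nlinarith [sq_nonneg (p - b * x)]
    nlinarith [sq_nonneg w, sq_nonneg r]
  have hv2 : v 2 ^ 2 ≤ (6 + 8 * c ^ 2) * (w ^ 2 + p ^ 2 + r ^ 2) := by
    have h1 : v 2 = w - v 1 := by rw [hw]; ring
    have h3 : v 2 ^ 2 ≤ 2 * w ^ 2 + 2 * v 1 ^ 2 := by
      rw [h1]; nlinarith [sq_nonneg (w - v 1 + 2 * v 1)]
    nlinarith [sq_nonneg p, sq_nonneg r]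
  have hv0 : v 0 ^ 2 ≤ 2 / t ^ 2 * (w ^ 2 + p ^ 2 + r ^ 2) := by
    have h1 : v 0 ^ 2 = b ^ 2 / t ^ 2 := by rw [hb]; field_simp
    rw [h1, div_mul_eq_mul_div]
    gcongr
  rw [Fin.sum_univ_three]
  linarith

/-- Upper bound on a squared entry, from `x ≤ exp x` at `x = θ₁ d / 2`. -/
lemma dirEntry_sq_le {d : SInf → SInf → ℝ} (hd : SqEuclidean d) (σ : ℕ → SInf)
    {θ : Fin 3 → ℝ} (hθ : ∀ i, 0 < θ i) (v : Fin 3 → ℝ) (i j : ℕ) :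
    dirEntry d σ θ v i j ^ 2 ≤ 3 * (4 * θ 1 ^ 2 / θ 0 ^ 2 + 1) * (∑ k, v k ^ 2) *
      Real.exp (-(θ 0) * d (σ i) (σ j)) := by
  set D := d (σ i) (σ j) with hD
  have hD0 : 0 ≤ D := hd.nonneg σ i j
  have h0 := hθ 0
  set E := Real.exp (-(θ 0) * D) with hE
  have hE0 : 0 < E := Real.exp_pos _
  have hE1 : E ≤ 1 := Real.exp_le_one_iff.2 (by nlinarith)
  have hDE : (D * E) ^ 2 ≤ 4 / θ 0 ^ 2 * E := by
    have h1 : θ 0 * D / 2 ≤ Real.exp (θ 0 * D / 2) := by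
      linarith [Real.add_one_le_exp (θ 0 * D / 2)]
    have h2 : (θ 0 * D / 2) ^ 2 ≤ Real.exp (θ 0 * D) := by
      calc (θ 0 * D / 2) ^ 2 ≤ Real.exp (θ 0 * D / 2) ^ 2 := by gcongr
        _ = Real.exp (θ 0 * D) := by rw [← Real.exp_nat_mul]; congr 1; push_cast; ring
    have h3 : Real.exp (θ 0 * D) * E = 1 := by
      rw [hE, ← Real.exp_add]; simp
    have h4 : (θ 0 * D / 2) ^ 2 * E ^ 2 ≤ E := by
      calc (θ 0 * D / 2) ^ 2 * E ^ 2 ≤ Real.exp (θ 0 * D) * E ^ 2 := by gcongr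
        _ = (Real.exp (θ 0 * D) * E) * E := by ring
        _ = E := by rw [h3, one_mul]
    calc (D * E) ^ 2 = 4 / θ 0 ^ 2 * ((θ 0 * D / 2) ^ 2 * E ^ 2) := by field_simp; norm_num
      _ ≤ _ := by gcongr
  set q : ℝ := if i = j then 1 else 0 with hq
  have hqE : q ^ 2 ≤ E := by
    by_cases h : i = j
    · have : D = 0 := by rw [hD, h, hd.self]
      simp [hq, h, hE, this]
    · simp [hq, h, hE0.le]
  have hEE : E ^ 2 ≤ E := by nlinarith
  have hent : dirEntry d σ θ v i j = v 1 * E - v 0 * (θ 1 * (D * E)) + v 2 * q := by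
    simp only [dirEntry, hq, ← hD, ← hE, mul_ite, mul_one, mul_zero]
    ring
  have hthree : ∀ a b e : ℝ, (a - b + e) ^ 2 ≤ 3 * (a ^ 2 + b ^ 2 + e ^ 2) := fun a b e => by
    nlinarith [sq_nonneg (a + b), sq_nonneg (a - e), sq_nonneg (b + e)]
  rw [hent]
  refine (hthree _ _ _).trans ?_
  set L := 4 * θ 1 ^ 2 / θ 0 ^ 2 with hL
  have hL0 : 0 ≤ L := by positivity
  have e1 : (v 1 * E) ^ 2 ≤ (L + 1) * v 1 ^ 2 * E := by
    rw [mul_pow]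
    have : v 1 ^ 2 * E ^ 2 ≤ v 1 ^ 2 * E := by gcongr
    have h5 : 0 ≤ L * (v 1 ^ 2 * E) := by positivity
    linarith
  have e0 : (v 0 * (θ 1 * (D * E))) ^ 2 ≤ (L + 1) * v 0 ^ 2 * E := by
    have : (v 0 * (θ 1 * (D * E))) ^ 2 ≤ v 0 ^ 2 * θ 1 ^ 2 * (4 / θ 0 ^ 2 * E) := by
      rw [mul_pow, mul_pow, ← mul_assoc]
      gcongr
    have h5 : v 0 ^ 2 * θ 1 ^ 2 * (4 / θ 0 ^ 2 * E) = L * v 0 ^ 2 * E := by rw [hL]; ring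
    have h6 : 0 ≤ v 0 ^ 2 * E := by positivity
    linarith
  have e2 : (v 2 * q) ^ 2 ≤ (L + 1) * v 2 ^ 2 * E := by
    rw [mul_pow]
    have : v 2 ^ 2 * q ^ 2 ≤ v 2 ^ 2 * E := by gcongr
    have h5 : 0 ≤ L * (v 2 ^ 2 * E) := by positivity
    linarith
  rw [Fin.sum_univ_three]
  linarith

/-- Lower bound on the squared norm of row `i`, from its entries at `i`, `i + 1` and `i + K`. -/
lemma row_lower_bound {d : SInf → SInf → ℝ} (hd : SqEuclidean d) (σ : ℕ → SInf)
    {θ : Fin 3 → ℝ} (hθ : ∀ i, 0 < θ i) (v : Fin 3 → ℝ) {c : ℝ} (hc : 0 < c)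
    (hstep : ∀ i, d (σ i) (σ (i + 1)) ≤ c) {K : ℕ} (hK : 2 ≤ K)
    (hfar : ∀ i, c + 1 ≤ d (σ i) (σ (i + K))) {i n : ℕ} (hi : i + K < n) :
    Real.exp (-(θ 0) * (K ^ 2 * c)) ^ 2 / (2 / θ 1 ^ 2 + 8 + 12 * c ^ 2) * (∑ k, v k ^ 2) ≤
      ∑ j ∈ Finset.range n, dirEntry d σ θ v i j ^ 2 := by
  have h0 := hθ 0
  have h1 := hθ 1
  set Q := Real.exp (-(θ 0) * (K ^ 2 * c)) with hQ
  have hK1 : (1 : ℝ) ≤ (K : ℝ) ^ 2 := by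
    have : (2 : ℝ) ≤ K := by exact_mod_cast hK
    nlinarith
  have hQ1 : Q ≤ 1 := Real.exp_le_one_iff.2 (by
    have : 0 ≤ θ 0 * (K ^ 2 * c) := by positivity
    linarith)
  have hexp : ∀ {D : ℝ}, D ≤ K ^ 2 * c → Q ^ 2 ≤ Real.exp (-(θ 0) * D) ^ 2 := by
    intro D hD
    have : Q ≤ Real.exp (-(θ 0) * D) := Real.exp_le_exp.2 (by nlinarith)
    have hQ0 : 0 < Q := Real.exp_pos _
    gcongr
  have hsub : ({i, i + 1, i + K} : Finset ℕ) ⊆ Finset.range n := by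
    intro a ha
    simp only [Finset.mem_insert, Finset.mem_singleton] at ha
    rw [Finset.mem_range]
    omega
  have hge := Finset.sum_le_sum_of_subset_of_nonneg hsub
    (f := fun j => dirEntry d σ θ v i j ^ 2) fun _ _ _ => sq_nonneg _
  rw [Finset.sum_insert (by simp; omega), Finset.sum_insert (by simp; omega),
    Finset.sum_singleton] at hge
  refine le_trans ?_ hge
  have hne1 : i ≠ i + 1 := by omega
  have hneK : i ≠ i + K := by omega
  have e0 : dirEntry d σ θ v i i = v 1 + v 2 := by simp [dirEntry, hd.self]
  have e1 : Q ^ 2 * (v 1 - v 0 * θ 1 * d (σ i) (σ (i + 1))) ^ 2 ≤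
      dirEntry d σ θ v i (i + 1) ^ 2 := by
    simp only [dirEntry, if_neg hne1, add_zero, mul_pow]
    rw [mul_comm]
    have := hexp (D := d (σ i) (σ (i + 1))) (by nlinarith [hstep i])
    gcongr
  have e2 : Q ^ 2 * (v 1 - v 0 * θ 1 * d (σ i) (σ (i + K))) ^ 2 ≤
      dirEntry d σ θ v i (i + K) ^ 2 := by
    simp only [dirEntry, if_neg hneK, add_zero, mul_pow]
    rw [mul_comm]
    have := hexp (hd.le_of_steps σ hstep i K)
    gcongr
  have hmain := sum_sq_le_of_two_distances v h1 (hd.nonneg σ i (i + 1)) (hstep i) (hfar i)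
  have hQsq : Q ^ 2 ≤ 1 := by
    have hQ0 : 0 < Q := Real.exp_pos _
    nlinarith
  have e0' : Q ^ 2 * (v 1 + v 2) ^ 2 ≤ dirEntry d σ θ v i i ^ 2 := by
    rw [e0]; nlinarith [sq_nonneg (v 1 + v 2)]
  set Z := 2 / θ 1 ^ 2 + 8 + 12 * c ^ 2 with hZ
  have hZ0 : 0 < Z := by positivity
  calc Q ^ 2 / Z * ∑ k, v k ^ 2 ≤ Q ^ 2 / Z * (Z * ((v 1 + v 2) ^ 2 +
        (v 1 - v 0 * θ 1 * d (σ i) (σ (i + 1))) ^ 2 +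
        (v 1 - v 0 * θ 1 * d (σ i) (σ (i + K))) ^ 2)) := by gcongr
    _ = Q ^ 2 * (v 1 + v 2) ^ 2 + (Q ^ 2 * (v 1 - v 0 * θ 1 * d (σ i) (σ (i + 1))) ^ 2 +
        Q ^ 2 * (v 1 - v 0 * θ 1 * d (σ i) (σ (i + K))) ^ 2) := by field_simp; ring
    _ ≤ _ := by gcongr

/-! ### Two-sided bounds on the quadratic form -/

lemma Rmat_eq (d : SInf → SInf → ℝ) {σ : ℕ → SInf}
    (hinj : Function.Injective σ) (θ : Fin 3 → ℝ) (n : ℕ) :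
    Rmat d σ θ n = θ 1 • (Matrix.of fun i j : Fin n => Real.exp (-(θ 0) * d (σ i.1) (σ j.1))) +
      θ 2 • (1 : Matrix (Fin n) (Fin n) ℝ) := by
  ext i j
  simp [Rmat, SInf.Kp, Matrix.one_apply, hinj.eq_iff, Fin.ext_iff]

/-- The quadratic form of `M_ML(n)` on unit vectors is eventually bounded above, and bounded below by
a positive constant, uniformly in `n`. -/
lemma exists_quadForm_bounds {d : SInf → SInf → ℝ} (hd : SqEuclidean d) {σ : ℕ → SInf}
    (h1 : SInf.Cond1 d σ) (h2 : SInf.Cond2 d σ) {θ : Fin 3 → ℝ} (hθ : ∀ i, 0 < θ i) :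
    ∃ δ C : ℝ, 0 < δ ∧ ∀ᶠ n : ℕ in Filter.atTop, ∀ v : Fin 3 → ℝ, ∑ k, v k ^ 2 = 1 →
      δ ≤ v ⬝ᵥ (Mml d σ θ n *ᵥ v) ∧ v ⬝ᵥ (Mml d σ θ n *ᵥ v) ≤ C := by
  obtain ⟨β, hβ, h1⟩ := h1
  obtain ⟨c, hc, hstep⟩ := h2
  have t0 := hθ 0
  have t1 := hθ 1
  have t2 := hθ 2
  obtain ⟨S, hS0, hS⟩ := exists_row_bound t0 hβ
  have hrow : ∀ i n : ℕ, ∑ j ∈ Finset.range n, Real.exp (-(θ 0) * d (σ i) (σ j)) ≤ S := by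
    intro i n
    refine le_trans (Finset.sum_le_sum fun j _ => Real.exp_le_exp.2 ?_) (hS i n)
    have := h1 i j
    nlinarith
  have hinj : Function.Injective σ := by
    intro i j hij
    by_contra hne
    have h := h1 i j
    rw [hij, hd.self] at h
    have : (0 : ℝ) < |(i : ℝ) - j| ^ β :=
      Real.rpow_pos_of_pos (abs_pos.2 (sub_ne_zero.2 (by exact_mod_cast hne))) _
    linarith
  -- Condition 1 puts `σ (i + K)` farther from `σ i` than `σ (i + 1)` can be.
  obtain ⟨K, hK, hfar⟩ : ∃ K : ℕ, 2 ≤ K ∧ ∀ i, c + 1 ≤ d (σ i) (σ (i + K)) := by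
    have ht := (tendsto_rpow_atTop hβ).comp (tendsto_natCast_atTop_atTop (R := ℝ))
    obtain ⟨K, hK1, hK2⟩ := ((ht.eventually_ge_atTop (c + 1)).and
      (Filter.eventually_ge_atTop 2)).exists
    refine ⟨K, hK2, fun i => hK1.trans ?_⟩
    have := h1 i (i + K)
    simpa using this
  set κ := Real.exp (-(θ 0) * (K ^ 2 * c)) ^ 2 / (2 / θ 1 ^ 2 + 8 + 12 * c ^ 2) with hκ
  have hκ0 : 0 < κ := by positivity
  set L := 3 * (4 * θ 1 ^ 2 / θ 0 ^ 2 + 1) with hL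
  have hL0 : 0 < L := by positivity
  set Λ := (θ 1 + θ 2) * S with hΛ
  have hΛ0 : 0 < Λ := by positivity
  refine ⟨Λ⁻¹ ^ 2 * κ / 4, (θ 2)⁻¹ ^ 2 * (L * S) / 2, by positivity, ?_⟩
  filter_upwards [Filter.eventually_ge_atTop (2 * K)] with n hn v hv
  have hn0 : (0 : ℝ) < n := by exact_mod_cast (by omega : 0 < n)
  have hE := hd.posSemidef σ t0.le n
  have hRp : (Rmat d σ θ n - θ 2 • (1 : Matrix (Fin n) (Fin n) ℝ)).PosSemidef := by
    rw [Rmat_eq d hinj, add_sub_cancel_right]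
    exact hE.smul t1.le
  have hR : (Rmat d σ θ n).IsHermitian := by
    have h := hRp.isHermitian.add
      ((Matrix.isHermitian_one (n := Fin n) (α := ℝ)).smul (k := θ 2) (IsSelfAdjoint.all _))
    rwa [sub_add_cancel] at h
  have hup : ∀ i, hR.eigenvalues i ≤ Λ := by
    refine eigenvalues_le_of_row_sum hR fun i => ?_
    calc ∑ j, |Rmat d σ θ n i j|
        ≤ ∑ j : Fin n, (θ 1 + θ 2) * Real.exp (-(θ 0) * d (σ i.1) (σ j.1)) := by
          refine Finset.sum_le_sum fun j _ => ?_
          have hpos := Real.exp_pos (-(θ 0) * d (σ i.1) (σ j.1))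
          simp only [Rmat, SInf.Kp, Matrix.of_apply]
          split_ifs with h
          · rw [h, hd.self, abs_of_nonneg (by positivity)]
            simp
          · rw [abs_of_nonneg (by positivity)]
            nlinarith
      _ = (θ 1 + θ 2) * ∑ j ∈ Finset.range n, Real.exp (-(θ 0) * d (σ i.1) (σ j)) := by
          rw [Finset.mul_sum, Finset.sum_range]
      _ ≤ Λ := by rw [hΛ]; gcongr; exact hrow _ _
  have hsymm : (∑ k, v k • dRmat d σ θ n k)ᵀ = ∑ k, v k • dRmat d σ θ n k := by
    rw [sum_smul_dRmat]
    ext i j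
    simp only [Matrix.transpose_apply, Matrix.of_apply, dirEntry, hd.symm σ j.1 i.1,
      eq_comm (a := j.1)]
  have htr := trace_inv_bounds hR hsymm t2 (le_eigenvalues_of_posSemidef_sub hR hRp) hup
  have hF : ∑ i, ∑ j, (∑ k, v k • dRmat d σ θ n k) i j ^ 2 =
      ∑ i ∈ Finset.range n, ∑ j ∈ Finset.range n, dirEntry d σ θ v i j ^ 2 := by
    rw [sum_smul_dRmat, Finset.sum_range]
    refine Finset.sum_congr rfl fun i _ => ?_
    rw [Finset.sum_range]
    rfl
  rw [hF] at htr
  set F := ∑ i ∈ Finset.range n, ∑ j ∈ Finset.range n, dirEntry d σ θ v i j ^ 2 with hFdef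
  have hFup : F ≤ n * (L * S) := by
    calc F ≤ ∑ i ∈ Finset.range n, L * S := by
          refine Finset.sum_le_sum fun i _ => ?_
          calc ∑ j ∈ Finset.range n, dirEntry d σ θ v i j ^ 2
              ≤ ∑ j ∈ Finset.range n, L * Real.exp (-(θ 0) * d (σ i) (σ j)) := by
                refine Finset.sum_le_sum fun j _ => ?_
                have := dirEntry_sq_le hd σ hθ v i j
                rwa [hv, mul_one] at this
            _ ≤ L * S := by rw [← Finset.mul_sum]; gcongr; exact hrow i n
      _ = n * (L * S) := by simp
  have hFlow : n / 2 * κ ≤ F := by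
    have hsub : Finset.range (n - K) ⊆ Finset.range n :=
      Finset.range_subset_range.2 (Nat.sub_le _ _)
    calc (n : ℝ) / 2 * κ ≤ ((n - K : ℕ) : ℝ) * κ := by
          have hnK : (2 : ℝ) * K ≤ n := by exact_mod_cast hn
          rw [Nat.cast_sub (by omega)]
          gcongr
          linarith
      _ = ∑ i ∈ Finset.range (n - K), κ := by simp
      _ ≤ ∑ i ∈ Finset.range (n - K), ∑ j ∈ Finset.range n, dirEntry d σ θ v i j ^ 2 := by
          refine Finset.sum_le_sum fun i hi => ?_
          have hi := Finset.mem_range.1 hi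
          have := row_lower_bound hd σ hθ v hc hstep hK hfar (i := i) (n := n) (by omega)
          rwa [hv, mul_one] at this
      _ ≤ F := Finset.sum_le_sum_of_subset_of_nonneg hsub fun _ _ _ => by positivity
  rw [Mml_quadForm]
  constructor
  · calc Λ⁻¹ ^ 2 * κ / 4 = 1 / (2 * (n : ℝ)) * (Λ⁻¹ ^ 2 * (n / 2 * κ)) := by field_simp; norm_num
      _ ≤ 1 / (2 * (n : ℝ)) * (Λ⁻¹ ^ 2 * F) := by gcongr
      _ ≤ _ := by gcongr; exact htr.1
  · calc _ ≤ 1 / (2 * (n : ℝ)) * ((θ 2)⁻¹ ^ 2 * F) := by gcongr; exact htr.2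
      _ ≤ 1 / (2 * (n : ℝ)) * ((θ 2)⁻¹ ^ 2 * (n * (L * S))) := by gcongr
      _ = (θ 2)⁻¹ ^ 2 * (L * S) / 2 := by field_simp

/-- Theorem 3, Equation (22): `0 < liminf λ_min(M_ML) ≤ limsup λ_max(M_ML) < ∞`. -/
theorem Mml_eigenvalues_bounded_away (d : SInf → SInf → ℝ)
    (hd : d = SInf.dKen ∨ d = SInf.dHam ∨ d = SInf.dFoot ∨ d = SInf.dS2)
    (σ : ℕ → SInf) (h1 : SInf.Cond1 d σ) (h2 : SInf.Cond2 d σ)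
    (θstar : Fin 3 → ℝ) (hθstar : ∀ i, 0 < θstar i)
    (hM : ∀ n : ℕ, (Mml d σ θstar n).IsHermitian) :
    0 < Filter.atTop.liminf (fun n : ℕ => ⨅ i : Fin 3, (hM n).eigenvalues i) ∧
    Filter.atTop.liminf (fun n : ℕ => ⨅ i : Fin 3, (hM n).eigenvalues i) ≤
      Filter.atTop.limsup (fun n : ℕ => ⨆ i : Fin 3, (hM n).eigenvalues i) ∧
    Filter.atTop.IsBoundedUnder (· ≤ ·)
      (fun n : ℕ => ⨆ i : Fin 3, (hM n).eigenvalues i) := by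
  have hsq : SqEuclidean d := by
    rcases hd with rfl | rfl | rfl | rfl
    exacts [sqEuclidean_dKen, sqEuclidean_dHam, sqEuclidean_dFoot, sqEuclidean_dS2]
  obtain ⟨δ, C, hδ, hev⟩ := exists_quadForm_bounds hsq h1 h2 hθstar
  have heig : ∀ᶠ n : ℕ in Filter.atTop, ∀ i : Fin 3,
      δ ≤ (hM n).eigenvalues i ∧ (hM n).eigenvalues i ≤ C := by
    filter_upwards [hev] with n hn i
    obtain ⟨v, hv, he⟩ := exists_unit_eigenvalue (hM n) i
    rw [he]
    exact hn v hv
  have hle : ∀ n : ℕ, (⨅ i : Fin 3, (hM n).eigenvalues i) ≤ ⨆ i : Fin 3, (hM n).eigenvalues i :=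
    fun n => ciInf_le_ciSup (Set.finite_range _).bddBelow (Set.finite_range _).bddAbove
  have hinf : ∀ᶠ n : ℕ in Filter.atTop, δ ≤ ⨅ i : Fin 3, (hM n).eigenvalues i :=
    heig.mono fun n hn => le_ciInf fun i => (hn i).1
  have hsup : ∀ᶠ n : ℕ in Filter.atTop, (⨆ i : Fin 3, (hM n).eigenvalues i) ≤ C :=
    heig.mono fun n hn => ciSup_le fun i => (hn i).2
  have hbsup : Filter.atTop.IsBoundedUnder (· ≤ ·)
      (fun n : ℕ => ⨆ i : Fin 3, (hM n).eigenvalues i) := ⟨C, hsup⟩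
  have hbinf : Filter.atTop.IsBoundedUnder (· ≥ ·)
      (fun n : ℕ => ⨅ i : Fin 3, (hM n).eigenvalues i) := ⟨δ, hinf⟩
  have hbinf' : Filter.atTop.IsBoundedUnder (· ≤ ·)
      (fun n : ℕ => ⨅ i : Fin 3, (hM n).eigenvalues i) :=
    ⟨C, hsup.mono fun n hn => (hle n).trans hn⟩
  have hbsup' : Filter.atTop.IsBoundedUnder (· ≥ ·)
      (fun n : ℕ => ⨆ i : Fin 3, (hM n).eigenvalues i) :=
    ⟨δ, hinf.mono fun n hn => le_trans hn (hle n)⟩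
  refine ⟨hδ.trans_le (Filter.le_liminf_of_le hbinf'.isCoboundedUnder_ge hinf), ?_, hbsup⟩
  exact (Filter.liminf_le_liminf (Filter.Eventually.of_forall hle) hbinf
    hbsup.isCoboundedUnder_ge).trans (Filter.liminf_le_limsup hbsup hbsup')
end
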